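/- There exist universal constants c₁ > 0, c₂ > 0 and c₃ > 0 such that for all integers n ≥ 1 and 1 ≤ r ≤ n/2: if u₁,…,u_r, v₁,…,v_r ∈ ℝⁿ are independent standard Gaussian random vectors, then with probability at least 1 − exp(−c₃·n) we have c₁·n²·r ≤ ‖Σ_{i=1}^r uᵢvᵢᵀ‖_F² ≤ c₂·n²·r. -/

import Mathlib

/-!
For matrices `U` and `V` with independent standard Gaussian entries, write
`‖UᵀV‖_F² = ‖U‖_F² * (‖UᵀV‖_F² / ‖U‖_F²)`. The first factor is chi-square. Once `U` is fixed, the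
`k`-th row of `UᵀV` is the combination of the rows of `V` with coefficients the `k`-th column of
`U`, so it is a standard Gaussian vector scaled by the norm of that column. The second factor is
therefore a convex combination of chi-square variables. These are dependent, but by Jensen's
inequality the chi-square bound on moment generating functions survives convex combinations, so that
no control of the operator norm of `U` is needed. Chernoff's bound then concentrates both factors.
-/

open MeasureTheory ProbabilityTheory Matrix
open scoped ENNReal Classical

noncomputable section

/-- Squared Euclidean norm of a finitely-indexed real vector. -/
def sqNorm {ι : Type*} [Fintype ι] (x : ι → ℝ) : ℝ := ∑ i, x i ^ 2

/-- Squared Frobenius norm of a real matrix. -/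
def frobSq {m n : Type*} [Fintype m] [Fintype n] (A : Matrix m n ℝ) : ℝ :=
  ∑ i, ∑ j, A i j ^ 2

/-- Spectral (ℓ₂ operator) norm of a real matrix. -/
def specNorm {m n : Type*} [Fintype m] [Fintype n] (A : Matrix m n ℝ) : ℝ :=
  sSup ((fun x : n → ℝ => Real.sqrt (sqNorm (A.mulVec x))) '' {x | sqNorm x ≤ 1})

/-- `i`-th largest singular value (1-based), characterized via
`σ_i(A) = min {‖A − X‖ : rank X ≤ i − 1}`. -/
def singVal {m n : Type*} [Fintype m] [Fintype n] (A : Matrix m n ℝ) (i : ℕ) : ℝ :=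
  sInf {c | ∃ X : Matrix m n ℝ, X.rank ≤ i - 1 ∧ c = specNorm (A - X)}

/-- Flattening of an `n × n` matrix into a vector in `ℝ^{n²}`. -/
def vec (n : ℕ) (A : Matrix (Fin n) (Fin n) ℝ) : Fin (n * n) → ℝ :=
  fun i => A (finProdFinEquiv.symm i).1 (finProdFinEquiv.symm i).2

/-- `u ⊗ v = vec (u vᵀ) ∈ ℝ^{n²}`. -/
def tensor {n : ℕ} (u v : Fin n → ℝ) : Fin (n * n) → ℝ :=
  vec n (Matrix.of fun i j => u i * v j)

/-- Standard Gaussian measure on `ι → ℝ`. -/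
def stdGaussian (ι : Type*) [Fintype ι] : Measure (ι → ℝ) :=
  Measure.pi fun _ => gaussianReal 0 1

/-- Standard Gaussian measure on `n × n` matrices (as `Fin n → Fin n → ℝ`). -/
def stdGaussianMat (n : ℕ) : Measure (Fin n → Fin n → ℝ) :=
  Measure.pi fun _ => stdGaussian (Fin n)

/-- Query maps of a deterministic `t`-round adaptive algorithm making `k` linear
measurements per round on inputs in `ℝ^N`. -/
def QueryMaps (N k t : ℕ) : Type :=
  (j : Fin t) → (Fin (j : ℕ) → (Fin k → ℝ)) → Matrix (Fin k) (Fin N) ℝ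

namespace QueryMaps

variable {N k t : ℕ}

/-- Restriction of a round-`j` history to the first `i` rounds. -/
def prefixHist {j : Fin t} (h : Fin (j : ℕ) → Fin k → ℝ) {i : Fin t}
    (hij : (i : ℕ) < (j : ℕ)) : Fin (i : ℕ) → Fin k → ℝ :=
  fun l => h ⟨l.1, l.isLt.trans hij⟩

/-- Validity of query maps: measurability, orthonormal rows within each round, and
orthogonality across rounds along consistent histories. -/
def Valid (Q : QueryMaps N k t) : Prop :=
  (∀ (j : Fin t) (i : Fin k) (l : Fin N), Measurable fun h => Q j h i l) ∧
  (∀ (j : Fin t) (h : Fin (j : ℕ) → Fin k → ℝ), Q j h * (Q j h)ᵀ = 1) ∧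
  (∀ (j i : Fin t) (hij : (i : ℕ) < (j : ℕ)) (h : Fin (j : ℕ) → Fin k → ℝ),
      Q j h * (Q i (prefixHist h hij))ᵀ = 0)

/-- Responses of the algorithm under exact linear measurements of `a`. -/
def resp (Q : QueryMaps N k t) (a : Fin N → ℝ) (j : Fin t) : Fin k → ℝ :=
  (Q j fun i => resp Q a ⟨i.1, i.isLt.trans j.isLt⟩).mulVec a
termination_by (j : ℕ)
decreasing_by exact i.isLt

/-- Responses of the algorithm under noisy linear measurements of `a`, with fresh
per-round noise `g`. -/
def nresp (Q : QueryMaps N k t) (a : Fin N → ℝ) (g : Fin t → Fin k → ℝ) (j : Fin t) :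
    Fin k → ℝ :=
  ((Q j fun i => nresp Q a g ⟨i.1, i.isLt.trans j.isLt⟩).mulVec a) + g j
termination_by (j : ℕ)
decreasing_by exact i.isLt

/-- The `tk × N` matrix stacking all the query matrices realized along the run of the
algorithm on input `a` (exact measurements). -/
def runMat (Q : QueryMaps N k t) (a : Fin N → ℝ) : Matrix (Fin t × Fin k) (Fin N) ℝ :=
  Matrix.of fun p l =>
    Q p.1 (fun i => resp Q a ⟨i.1, i.isLt.trans p.1.isLt⟩) p.2 l

end QueryMaps

/-- Kullback–Leibler divergence, valued in `[0, ∞]`, defined with the natural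
logarithm. -/
def klDiv {Ω : Type*} [MeasurableSpace Ω] (P Q : Measure Ω) : ℝ≥0∞ :=
  if P ≪ Q ∧ Integrable (fun x => Real.log ((P.rnDeriv Q x).toReal)) P then
    ENNReal.ofReal (∫ x, Real.log ((P.rnDeriv Q x).toReal) ∂P)
  else ⊤


/-- The rank-`r` plant `Σ_{i=1}^r uᵢ vᵢᵀ` built from the rows of `U` and `V`. -/
def plant {n r : ℕ} (U V : Fin r → Fin n → ℝ) : Matrix (Fin n) (Fin n) ℝ :=
  Matrix.of fun i j => ∑ l, U l i * V l j

/-- Schatten-`p` norm (real `p`), via the singular values. -/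
def schattenNorm {n : ℕ} (p : ℝ) (A : Matrix (Fin n) (Fin n) ℝ) : ℝ :=
  (∑ i ∈ Finset.range n, singVal A (i + 1) ^ p) ^ (1 / p)

/-- Ky-Fan `p` norm: sum of the `p` largest singular values. -/
def kyFanNorm {n : ℕ} (p : ℕ) (A : Matrix (Fin n) (Fin n) ℝ) : ℝ :=
  ∑ i ∈ Finset.range p, singVal A (i + 1)

lemma four_mul_exp_neg_three_mul_le_exp_neg {x : ℝ} (hx : 1 ≤ x) :
    4 * Real.exp (-(3 * x)) ≤ Real.exp (-x) := by
  have four_le : 4 ≤ Real.exp (2 * x) := by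
    nlinarith [Real.quadratic_le_exp_of_nonneg (x := 2 * x) (by linarith)]
  calc 4 * Real.exp (-(3 * x))
    _ ≤ Real.exp (2 * x) * Real.exp (-(3 * x)) := by gcongr
    _ = Real.exp (-x) := by rw [← Real.exp_add]; ring_nf

lemma mem_Icc_mul_of_div_mem_Ioo {a b c d x y : ℝ} (ha : 0 ≤ a) (hc : 0 ≤ c)
    (hx : x ∈ Set.Ioo a b) (hyx : y / x ∈ Set.Ioo c d) : y ∈ Set.Icc (c * a) (d * b) := by
  obtain ⟨hax, hxb⟩ := hx
  obtain ⟨hcy, hyd⟩ := hyx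
  have hx_pos : 0 < x := ha.trans_lt hax
  rw [← div_mul_cancel₀ y hx_pos.ne']
  have hyx_nonneg : 0 ≤ y / x := hc.trans hcy.le
  exact ⟨by gcongr, mul_le_mul hyd.le hxb.le hx_pos.le (hyx_nonneg.trans hyd.le)⟩

lemma measure_prod_le_add_of_forall_notMem {α β : Type*} [MeasurableSpace α] [MeasurableSpace β]
    {P : Measure α} {Q : Measure β} [IsProbabilityMeasure P] [IsProbabilityMeasure Q]
    {A : Set α} {S : Set (α × β)} {δ : ℝ≥0∞} (hA : MeasurableSet A) (hS : MeasurableSet S)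
    (h : ∀ x ∉ A, Q (Prod.mk x ⁻¹' S) ≤ δ) : P.prod Q S ≤ P A + δ := by
  calc P.prod Q S
    _ = ∫⁻ x, Q (Prod.mk x ⁻¹' S) ∂P := Measure.prod_apply hS
    _ ≤ ∫⁻ x, A.indicator 1 x + δ ∂P := by
      refine lintegral_mono fun x => ?_
      by_cases hx : x ∈ A
      · simpa [hx] using prob_le_one.trans le_self_add
      · simpa [hx] using h x hx
    _ = P A + δ := by
      rw [lintegral_add_right _ measurable_const, lintegral_indicator_one hA]
      simp

/-- `X` has moment generating function at most `(1 - 2t)^(-N/2)`, that of the chi-square law with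
`N` degrees of freedom, for all `t < 1/2`. This is to the chi-square law what `HasSubgaussianMGF` is
to the Gaussian one; unlike being chi-square, it is preserved by convex combinations. -/
structure HasSubChiSquareMGF {Ω : Type*} {mΩ : MeasurableSpace Ω} (X : Ω → ℝ) (N : ℕ)
    (μ : Measure Ω) : Prop where
  integrable_exp_mul : ∀ t < 1 / 2, Integrable (fun ω => Real.exp (t * X ω)) μ
  mgf_le : ∀ t < 1 / 2, mgf X μ t ≤ (√(1 - 2 * t))⁻¹ ^ N

namespace HasSubChiSquareMGF

variable {Ω : Type*} {mΩ : MeasurableSpace Ω} {μ : Measure Ω} {X : Ω → ℝ} {N : ℕ}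

lemma aemeasurable (h : HasSubChiSquareMGF X N μ) : AEMeasurable X μ :=
  Real.aemeasurable_of_aemeasurable_exp_mul (t := -1) (by norm_num)
    (h.integrable_exp_mul (-1) (by norm_num)).aemeasurable

lemma of_map {Ω' : Type*} {mΩ' : MeasurableSpace Ω'} {μ : Measure Ω'} {Y : Ω' → Ω}
    (hY : AEMeasurable Y μ) (h : HasSubChiSquareMGF X N (μ.map Y)) :
    HasSubChiSquareMGF (X ∘ Y) N μ where
  integrable_exp_mul t ht := by
    have hint := h.integrable_exp_mul t ht
    rwa [integrable_map_measure hint.aestronglyMeasurable hY] at hint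
  mgf_le t ht := by
    rw [← mgf_map hY (h.integrable_exp_mul t ht).aestronglyMeasurable]
    exact h.mgf_le t ht

lemma sum_pi {ι : Type*} [Fintype ι] {Ω : ι → Type*} {mΩ : ∀ i, MeasurableSpace (Ω i)}
    {μ : ∀ i, Measure (Ω i)} [∀ i, SigmaFinite (μ i)] {X : ∀ i, Ω i → ℝ} {N : ι → ℕ}
    (h : ∀ i, HasSubChiSquareMGF (X i) (N i) (μ i)) :
    HasSubChiSquareMGF (fun ω => ∑ i, X i (ω i)) (∑ i, N i) (Measure.pi μ) where
  integrable_exp_mul t ht := by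
    simp_rw [Finset.mul_sum, Real.exp_sum]
    exact Integrable.fintype_prod_dep fun i => (h i).integrable_exp_mul t ht
  mgf_le t ht := by
    calc mgf (fun ω => ∑ i, X i (ω i)) (Measure.pi μ) t
      _ = ∏ i, mgf (X i) (μ i) t := by
        simp_rw [mgf, Finset.mul_sum, Real.exp_sum]
        exact integral_fintype_prod_eq_prod fun i x => Real.exp (t * X i x)
      _ ≤ ∏ i, (√(1 - 2 * t))⁻¹ ^ N i :=
        Finset.prod_le_prod (fun _ _ => mgf_nonneg) fun i _ => (h i).mgf_le t ht
      _ = (√(1 - 2 * t))⁻¹ ^ ∑ i, N i := Finset.prod_pow_eq_pow_sum _ _ _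

lemma convex_sum {κ : Type*} [Fintype κ] {X : κ → Ω → ℝ} {p : κ → ℝ} (hp : ∀ k, 0 ≤ p k)
    (hp_sum : ∑ k, p k = 1) (h : ∀ k, HasSubChiSquareMGF (X k) N μ) :
    HasSubChiSquareMGF (fun ω => ∑ k, p k * X k ω) N μ := by
  have jensen (t : ℝ) (ω : Ω) :
      Real.exp (t * ∑ k, p k * X k ω) ≤ ∑ k, p k * Real.exp (t * X k ω) := by
    simpa [Finset.mul_sum, mul_left_comm] using convexOn_exp.map_sum_le (t := Finset.univ)
      (fun k _ => hp k) hp_sum fun k _ => Set.mem_univ (t * X k ω)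
  have integrable_term (t : ℝ) (ht : t < 1 / 2) (k : κ) :
      Integrable (fun ω => p k * Real.exp (t * X k ω)) μ :=
    ((h k).integrable_exp_mul t ht).const_mul _
  have integrable_bound (t : ℝ) (ht : t < 1 / 2) :
      Integrable (fun ω => ∑ k, p k * Real.exp (t * X k ω)) μ :=
    integrable_finsetSum _ fun k _ => integrable_term t ht k
  have integrable_exp (t : ℝ) (ht : t < 1 / 2) :
      Integrable (fun ω => Real.exp (t * ∑ k, p k * X k ω)) μ := by
    have hX := fun k => (h k).aemeasurable
    refine (integrable_bound t ht).mono' (by fun_prop) (ae_of_all _ fun ω => ?_)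
    simpa using jensen t ω
  refine ⟨integrable_exp, fun t ht => ?_⟩
  calc mgf (fun ω => ∑ k, p k * X k ω) μ t
    _ ≤ ∫ ω, ∑ k, p k * Real.exp (t * X k ω) ∂μ :=
      integral_mono (integrable_exp t ht) (integrable_bound t ht) (jensen t)
    _ = ∑ k, p k * mgf (X k) μ t := by
      rw [integral_finsetSum _ fun k _ => integrable_term t ht k]
      simp_rw [integral_const_mul, mgf]
    _ ≤ ∑ k, p k * (√(1 - 2 * t))⁻¹ ^ N :=
      Finset.sum_le_sum fun k _ => mul_le_mul_of_nonneg_left ((h k).mgf_le t ht) (hp k)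
    _ = (√(1 - 2 * t))⁻¹ ^ N := by rw [← Finset.sum_mul, hp_sum, one_mul]

-- The optimal Chernoff parameter for the threshold `exp u * N`.
lemma mgf_le_exp (h : HasSubChiSquareMGF X N μ) (u : ℝ) :
    mgf X μ ((1 - Real.exp (-u)) / 2) ≤ Real.exp (N * u / 2) := by
  have ht : (1 - Real.exp (-u)) / 2 < 1 / 2 := by linarith [Real.exp_pos (-u)]
  convert! h.mgf_le _ ht using 1
  rw [mul_div_cancel₀ _ two_ne_zero, sub_sub_cancel, ← Real.exp_half, ← Real.exp_neg,
    ← Real.exp_nat_mul]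
  ring_nf

section Tails

variable [IsFiniteMeasure μ]

lemma measure_le_le_exp (h : HasSubChiSquareMGF X N μ) {u : ℝ} (hu : u ≤ 0) :
    μ.real {ω | X ω ≤ Real.exp u * N} ≤ Real.exp (-(N * (Real.exp u - 1 - u) / 2)) := by
  set t := (1 - Real.exp (-u)) / 2 with ht
  have ht_le : t ≤ 0 := by linarith [Real.one_le_exp (neg_nonneg.2 hu)]
  calc μ.real {ω | X ω ≤ Real.exp u * N}
    _ ≤ Real.exp (-t * (Real.exp u * N)) * mgf X μ t :=
      measure_le_le_exp_mul_mgf _ ht_le (h.integrable_exp_mul t (by linarith))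
    _ ≤ Real.exp (-t * (Real.exp u * N)) * Real.exp (N * u / 2) := by
      gcongr
      exact h.mgf_le_exp u
    _ = Real.exp (-(N * (Real.exp u - 1 - u) / 2)) := by
      rw [← Real.exp_add, ht, Real.exp_neg]
      field_simp
      ring_nf

lemma measure_ge_le_exp (h : HasSubChiSquareMGF X N μ) {u : ℝ} (hu : 0 ≤ u) :
    μ.real {ω | Real.exp u * N ≤ X ω} ≤ Real.exp (-(N * (Real.exp u - 1 - u) / 2)) := by
  set t := (1 - Real.exp (-u)) / 2 with ht
  have ht_nonneg : 0 ≤ t := by linarith [Real.exp_le_one_iff.2 (neg_nonpos.2 hu)]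
  have ht_lt : t < 1 / 2 := by linarith [Real.exp_pos (-u)]
  calc μ.real {ω | Real.exp u * N ≤ X ω}
    _ ≤ Real.exp (-t * (Real.exp u * N)) * mgf X μ t :=
      measure_ge_le_exp_mul_mgf _ ht_nonneg (h.integrable_exp_mul t ht_lt)
    _ ≤ Real.exp (-t * (Real.exp u * N)) * Real.exp (N * u / 2) := by
      gcongr
      exact h.mgf_le_exp u
    _ = Real.exp (-(N * (Real.exp u - 1 - u) / 2)) := by
      rw [← Real.exp_add, ht, Real.exp_neg]
      field_simp
      ring_nf

-- `-7` and `4` are integers `u` for which the rate `(exp u - 1 - u) / 2` is at least `3`.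
lemma measure_notMem_Ioo_le (h : HasSubChiSquareMGF X N μ) :
    μ {ω | X ω ∉ Set.Ioo (Real.exp (-7) * N) (Real.exp 4 * N)} ≤
      ENNReal.ofReal (2 * Real.exp (-(3 * N))) := by
  have lower : μ.real {ω | X ω ≤ Real.exp (-7) * N} ≤ Real.exp (-(3 * N)) := by
    refine (h.measure_le_le_exp (by norm_num)).trans (Real.exp_le_exp.2 ?_)
    nlinarith [Real.exp_pos (-7), N.cast_nonneg (α := ℝ)]
  have upper : μ.real {ω | Real.exp 4 * N ≤ X ω} ≤ Real.exp (-(3 * N)) := by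
    refine (h.measure_ge_le_exp (by norm_num)).trans (Real.exp_le_exp.2 ?_)
    nlinarith [Real.quadratic_le_exp_of_nonneg (x := 4) (by norm_num), N.cast_nonneg (α := ℝ)]
  have split : {ω | X ω ∉ Set.Ioo (Real.exp (-7) * N) (Real.exp 4 * N)} =
      {ω | X ω ≤ Real.exp (-7) * N} ∪ {ω | Real.exp 4 * N ≤ X ω} := by
    ext ω
    simp [imp_iff_not_or]
  rw [← ofReal_measureReal, split]
  refine ENNReal.ofReal_le_ofReal ((measureReal_union_le _ _).trans ?_)
  linarith

end Tails

end HasSubChiSquareMGF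

lemma hasSubChiSquareMGF_sq_gaussianReal :
    HasSubChiSquareMGF (fun x => x ^ 2) 1 (gaussianReal 0 1) := by
  have density (t x : ℝ) : gaussianPDFReal 0 1 x * Real.exp (t * x ^ 2) =
      (√(2 * Real.pi))⁻¹ * Real.exp (-(1 / 2 - t) * x ^ 2) := by
    simp only [gaussianPDFReal, NNReal.coe_one, mul_one, sub_zero, mul_assoc, ← Real.exp_add]
    ring_nf
  refine ⟨fun t ht => ?_, fun t ht => ?_⟩
  · rw [gaussianReal_of_var_ne_zero 0 one_ne_zero,
      integrable_withDensity_iff_integrable_smul' (measurable_gaussianPDF 0 1)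
        (ae_of_all _ fun _ => gaussianPDF_lt_top)]
    simp_rw [toReal_gaussianPDF, smul_eq_mul, density]
    exact (integrable_exp_neg_mul_sq (by linarith)).const_mul _
  · refine le_of_eq ?_
    calc mgf (fun x => x ^ 2) (gaussianReal 0 1) t
      _ = (√(2 * Real.pi))⁻¹ * √(Real.pi / (1 / 2 - t)) := by
        simp_rw [mgf, integral_gaussianReal_eq_integral_smul one_ne_zero, smul_eq_mul, density,
          integral_const_mul, integral_gaussian]
      _ = (√(1 - 2 * t))⁻¹ ^ 1 := by
        rw [pow_one, ← Real.sqrt_inv, ← Real.sqrt_mul (by positivity), ← Real.sqrt_inv]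
        congr 1
        have : 1 - 2 * t ≠ 0 := by linarith
        have : 1 / 2 - t ≠ 0 := by linarith
        field_simp

lemma map_sum_smul_pi_eq {E : Type*} [NormedAddCommGroup E] [NormedSpace ℝ E] [CompleteSpace E]
    [SecondCountableTopology E] [MeasurableSpace E] [BorelSpace E] {μ : Measure E} [IsGaussian μ]
    (hμ : ∫ x, x ∂μ = 0) {κ : Type*} [Fintype κ] {a : κ → ℝ} (ha : ∑ l, a l ^ 2 = 1) :
    (Measure.pi fun _ : κ => μ).map (fun x => ∑ l, a l • x l) = μ := by
  let S : (κ → E) →L[ℝ] E := ∑ l, a l • ContinuousLinearMap.proj l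
  have coe_S : (fun x : κ → E => ∑ l, a l • x l) = S := by
    ext x
    simp [S]
  have charFunDual_eq (L : StrongDual ℝ E) :
      charFunDual μ L = Complex.exp (-(Var[L; μ] / 2 : ℝ)) := by
    have mean : ∫ x, L x ∂μ = 0 := by
      rw [L.integral_comp_id_comm IsGaussian.integrable_id, hμ, map_zero]
    simp [IsGaussian.charFunDual_eq, integral_complex_ofReal, mean]
  have comp_single (L : StrongDual ℝ E) (l : κ) :
      (L.comp S).comp (.single ℝ (fun _ => E) l) = a l • L := by
    ext x
    simp [S, Pi.single_apply, apply_ite]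
  rw [coe_S]
  refine Measure.ext_of_charFunDual (funext fun L => ?_)
  calc charFunDual ((Measure.pi fun _ => μ).map S) L
    _ = ∏ l, charFunDual μ (a l • L) := by
      rw [charFunDual_map, charFunDual_pi]
      simp_rw [comp_single]
    _ = Complex.exp (-((∑ l, a l ^ 2) * Var[L; μ] / 2 : ℝ)) := by
      simp_rw [charFunDual_eq, ← Complex.exp_sum]
      simp only [FunLike.coe_smul, variance_smul]
      push_cast
      simp [Finset.sum_mul, Finset.sum_div]
    _ = charFunDual μ L := by rw [ha, one_mul, charFunDual_eq]

section StdGaussian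

variable {κ n : Type*} [Fintype κ] [Fintype n]

instance : IsGaussian (stdGaussian n) := by
  have coord (i : n) : HasGaussianLaw (fun x : n → ℝ => x i) (stdGaussian n) :=
    (measurePreserving_eval (fun _ : n => gaussianReal 0 1) i).hasLaw.hasGaussianLaw
  have indep : iIndepFun (fun i (x : n → ℝ) => x i) (stdGaussian n) :=
    iIndepFun_pi (X := fun _ => id) fun _ => aemeasurable_id
  simpa using (indep.hasGaussianLaw coord).isGaussian_map

lemma integral_id_stdGaussian_eq_zero : ∫ x, x ∂(stdGaussian n) = 0 := by
  have integrable_coord (i : n) : Integrable (fun x : n → ℝ => x i) (stdGaussian n) :=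
    integrable_eval IsGaussian.integrable_id
  ext i
  rw [eval_integral (f := fun x => x) integrable_coord i]
  exact integral_eval.trans integral_id_gaussianReal

lemma hasSubChiSquareMGF_sqNorm :
    HasSubChiSquareMGF sqNorm (Fintype.card n) (stdGaussian n) := by
  unfold sqNorm _root_.stdGaussian
  simpa using HasSubChiSquareMGF.sum_pi fun _ : n => hasSubChiSquareMGF_sq_gaussianReal

variable (κ n) in
/-- The law of a random matrix with independent standard Gaussian entries, given by the family of
its rows. -/
abbrev gaussianRows : Measure (κ → n → ℝ) :=
  Measure.pi fun _ => stdGaussian n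

lemma hasSubChiSquareMGF_frobSq :
    HasSubChiSquareMGF (fun U => frobSq (of U)) (Fintype.card κ * Fintype.card n)
      (gaussianRows κ n) := by
  unfold frobSq
  simpa [sqNorm] using HasSubChiSquareMGF.sum_pi fun _ : κ => hasSubChiSquareMGF_sqNorm (n := n)

lemma hasSubChiSquareMGF_sqNorm_sum_smul {b : κ → ℝ} (hb : sqNorm b = 1) :
    HasSubChiSquareMGF (fun V => sqNorm (∑ l, b l • V l)) (Fintype.card n)
      (gaussianRows κ n) := by
  have measurable_comb : Measurable fun V : κ → n → ℝ => ∑ l, b l • V l :=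
    Finset.measurable_sum _ fun l _ => (measurable_pi_apply l).const_smul (b l)
  have h := hasSubChiSquareMGF_sqNorm (n := n)
  rw [← map_sum_smul_pi_eq integral_id_stdGaussian_eq_zero hb] at h
  simpa only [Function.comp_def] using h.of_map measurable_comb.aemeasurable

end StdGaussian

lemma row_transpose_mul {κ m n : Type*} [Fintype κ] (A : Matrix κ m ℝ) (B : Matrix κ n ℝ) (i : m) :
    (Aᵀ * B).row i = ∑ l, A l i • B.row l := by
  ext j
  simp [mul_apply]

section Frobenius

variable {m n κ : Type*} [Fintype m] [Fintype n] [Fintype κ]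

lemma sqNorm_nonneg (x : n → ℝ) : 0 ≤ sqNorm x :=
  Finset.sum_nonneg fun _ _ => sq_nonneg _

lemma sqNorm_smul (c : ℝ) (x : n → ℝ) : sqNorm (c • x) = c ^ 2 * sqNorm x := by
  simp [sqNorm, mul_pow, Finset.mul_sum]

lemma exists_sqNorm_eq_one_eq_smul [Nonempty n] (x : n → ℝ) :
    ∃ b, sqNorm b = 1 ∧ x = √(sqNorm x) • b := by
  rcases (sqNorm_nonneg x).eq_or_lt' with hx | hx
  · have : x = 0 := by
      ext i
      simpa using (Finset.sum_eq_zero_iff_of_nonneg fun i _ => sq_nonneg (x i)).1 hx i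
    obtain ⟨i⟩ := ‹Nonempty n›
    exact ⟨Pi.single i 1, by simp [sqNorm, Pi.single_apply], by simp [this, sqNorm]⟩
  · have : √(sqNorm x) ≠ 0 := (Real.sqrt_pos.2 hx).ne'
    refine ⟨(√(sqNorm x))⁻¹ • x, ?_, (smul_inv_smul₀ this x).symm⟩
    rw [sqNorm_smul, inv_pow, Real.sq_sqrt hx.le, inv_mul_cancel₀ hx.ne']

lemma frobSq_eq_sum_sqNorm_row (A : Matrix m n ℝ) : frobSq A = ∑ i, sqNorm (A.row i) := rfl

lemma frobSq_eq_sum_sqNorm_col (A : Matrix m n ℝ) : frobSq A = ∑ j, sqNorm (A.col j) :=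
  Finset.sum_comm

lemma hasSubChiSquareMGF_frobSq_transpose_mul_div {A : Matrix κ m ℝ} (hA : 0 < frobSq A) :
    HasSubChiSquareMGF (fun V => frobSq (Aᵀ * of V) / frobSq A) (Fintype.card n)
      (gaussianRows κ n) := by
  have : Nonempty κ := by
    by_contra! h
    simp [frobSq] at hA
  choose b hb hA_col using fun i => exists_sqNorm_eq_one_eq_smul (A.col i)
  have ratio (V : κ → n → ℝ) : frobSq (Aᵀ * of V) / frobSq A =
      ∑ i, sqNorm (A.col i) / frobSq A * sqNorm (∑ l, b i l • V l) := by
    have row (i : m) : (Aᵀ * of V).row i = √(sqNorm (A.col i)) • ∑ l, b i l • V l := by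
      rw [row_transpose_mul, Finset.smul_sum]
      refine Finset.sum_congr rfl fun l _ => ?_
      rw [smul_smul]
      exact congrArg (· • V l) (congrFun (hA_col i) l)
    simp_rw [frobSq_eq_sum_sqNorm_row (Aᵀ * of V), row, sqNorm_smul,
      Real.sq_sqrt (sqNorm_nonneg _), Finset.sum_div, div_mul_eq_mul_div]
  simp_rw [ratio]
  refine .convex_sum (fun i => div_nonneg (sqNorm_nonneg _) hA.le) ?_ fun i =>
    hasSubChiSquareMGF_sqNorm_sum_smul (hb i)
  rw [← Finset.sum_div, ← frobSq_eq_sum_sqNorm_col, div_self hA.ne']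

lemma measurable_frobSq {Ω : Type*} [MeasurableSpace Ω] {A : Ω → Matrix m n ℝ}
    (hA : ∀ i j, Measurable fun ω => A ω i j) : Measurable fun ω => frobSq (A ω) := by
  unfold frobSq
  fun_prop

lemma measure_frobSq_transpose_mul_notMem_Icc_le :
    ((gaussianRows κ m).prod (gaussianRows κ n))
        {p | frobSq ((of p.1)ᵀ * of p.2) ∉
          Set.Icc (Real.exp (-14) * (Fintype.card m * Fintype.card n) * Fintype.card κ)
            (Real.exp 8 * (Fintype.card m * Fintype.card n) * Fintype.card κ)} ≤
      ENNReal.ofReal (2 * Real.exp (-(3 * (Fintype.card κ * Fintype.card m)))) +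
        ENNReal.ofReal (2 * Real.exp (-(3 * Fintype.card n))) := by
  set M : ℝ := Fintype.card κ * Fintype.card m with hM
  have meas_norm : Measurable fun U : κ → m → ℝ => frobSq (of U) :=
    measurable_frobSq fun i j => by simp only [of_apply]; fun_prop
  have meas_prod : Measurable fun p : (κ → m → ℝ) × (κ → n → ℝ) => frobSq ((of p.1)ᵀ * of p.2) :=
    measurable_frobSq fun i j => by simp only [mul_apply, transpose_apply, of_apply]; fun_prop
  have first : gaussianRows κ m {U | frobSq (of U) ∉ Set.Ioo (Real.exp (-7) * M) (Real.exp 4 * M)}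
      ≤ ENNReal.ofReal (2 * Real.exp (-(3 * M))) := by
    simpa [hM] using hasSubChiSquareMGF_frobSq.measure_notMem_Ioo_le
  refine (measure_prod_le_add_of_forall_notMem (meas_norm measurableSet_Ioo).compl
    (meas_prod measurableSet_Icc).compl fun U hU => ?_).trans (add_le_add_left first _)
  replace hU := not_not.1 hU
  have hU_pos : 0 < frobSq (of U) := lt_of_le_of_lt (by positivity) hU.1
  refine (hasSubChiSquareMGF_frobSq_transpose_mul_div hU_pos).measure_notMem_Ioo_le.trans'
    (measure_mono fun V hV hV_ratio => hV ?_)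
  suffices h : frobSq ((of U)ᵀ * of V) ∈ Set.Icc _ _ from h
  convert mem_Icc_mul_of_div_mem_Ioo (by positivity) (by positivity) hU hV_ratio using 2
  · rw [show (-14 : ℝ) = -7 + -7 by norm_num, Real.exp_add, hM]
    ring
  · rw [show (8 : ℝ) = 4 + 4 by norm_num, Real.exp_add, hM]
    ring

end Frobenius

lemma plant_eq_transpose_mul {n r : ℕ} (U V : Fin r → Fin n → ℝ) :
    plant U V = (of U)ᵀ * of V := rfl

theorem plant_frobenius_concentration_general :
    ∃ c₁ c₂ c₃ : ℝ, 0 < c₁ ∧ 0 < c₂ ∧ 0 < c₃ ∧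
      ∀ (κ m n : Type*) [Fintype κ] [Fintype m] [Fintype n],
      1 - ENNReal.ofReal (Real.exp (-(c₃ * min (Fintype.card m) (Fintype.card n)))) ≤
        ((gaussianRows κ m).prod (gaussianRows κ n))
          {p | c₁ * (Fintype.card m * Fintype.card n) * Fintype.card κ ≤
                frobSq ((of p.1)ᵀ * of p.2) ∧
              frobSq ((of p.1)ᵀ * of p.2) ≤
                c₂ * (Fintype.card m * Fintype.card n) * Fintype.card κ} := by
  refine ⟨Real.exp (-14), Real.exp 8, 1, Real.exp_pos _, Real.exp_pos _, one_pos, ?_⟩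
  intro κ m n _ _ _
  rcases isEmpty_or_nonempty κ with _ | _
  · simp [frobSq, mul_apply]
  set N := min (Fintype.card m) (Fintype.card n)
  rcases N.eq_zero_or_pos with hN_zero | hN_pos
  · simp [hN_zero]
  have rate {k : ℝ} (hk : N ≤ k) : 2 * Real.exp (-(3 * k)) ≤ 2 * Real.exp (-(3 * N)) := by gcongr
  set P := (gaussianRows κ m).prod (gaussianRows κ n)
  set S := {p : (κ → m → ℝ) × (κ → n → ℝ) | _}
  have failure : P Sᶜ ≤ ENNReal.ofReal (Real.exp (-N)) := by
    refine measure_frobSq_transpose_mul_notMem_Icc_le.trans ?_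
    rw [← ENNReal.ofReal_add (by positivity) (by positivity)]
    refine ENNReal.ofReal_le_ofReal ?_
    have first_small := rate (k := Fintype.card κ * Fintype.card m) (by
      exact_mod_cast (min_le_left _ _).trans (Nat.le_mul_of_pos_left _ Fintype.card_pos))
    have second_small := rate (k := Fintype.card n) (by exact_mod_cast min_le_right _ _)
    linarith [four_mul_exp_neg_three_mul_le_exp_neg (x := N) (by exact_mod_cast hN_pos)]
  rw [tsub_le_iff_right, one_mul]
  calc 1
    _ = P Set.univ := measure_univ.symm
    _ ≤ P S + P Sᶜ := measure_univ_le_add_compl S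
    _ ≤ P S + ENNReal.ofReal (Real.exp (-N)) := by gcongr

/-- Frobenius norm concentration for the rank-`r` Gaussian plant. -/
theorem plant_frobenius_concentration :
    ∃ c₁ c₂ c₃ : ℝ, 0 < c₁ ∧ 0 < c₂ ∧ 0 < c₃ ∧
      ∀ (n r : ℕ), 1 ≤ n → 1 ≤ r → 2 * r ≤ n →
      1 - ENNReal.ofReal (Real.exp (-(c₃ * n))) ≤
        ((Measure.pi fun _ : Fin r => stdGaussian (Fin n)).prod
            (Measure.pi fun _ : Fin r => stdGaussian (Fin n)))
          {p | c₁ * (n : ℝ) ^ 2 * r ≤ frobSq (plant p.1 p.2) ∧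
               frobSq (plant p.1 p.2) ≤ c₂ * (n : ℝ) ^ 2 * r} := by
  obtain ⟨c₁, c₂, c₃, h₁, h₂, h₃, h⟩ := plant_frobenius_concentration_general
  refine ⟨c₁, c₂, c₃, h₁, h₂, h₃, fun n r _ _ _ => ?_⟩
  simpa [sq, plant_eq_transpose_mul] using h (Fin r) (Fin n) (Fin n)

end
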